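/- Under the adapted pure-frontal setup with focal data, assume κ_t(0) ≠ 0 and r_c(0) = 0. Then for j = 1,2: rank d(C_j)_0 = 1, and at every point the derivative of C_j in the direction of the principal vector field V_j satisfies d(C_j)(V_j) = (V_jρ_j)·ν; in particular V_j is a null vector field of C_j along the singular set {V_jρ_j = 0} of C_j. -/

import Mathlib

open Filter

noncomputable section

/-- Vectors in ℝ³, modeled as `Fin 3 → ℝ`. -/
abbrev R3 : Type := Fin 3 → ℝ

/-- The Euclidean inner product on ℝ³. -/
def dot3 (a b : R3) : ℝ := a 0 * b 0 + a 1 * b 1 + a 2 * b 2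

/-- The Euclidean norm on ℝ³. -/
def norm3 (a : R3) : ℝ := Real.sqrt (dot3 a a)

/-- Partial derivative in the `u`-direction. -/
def pu {E : Type*} [NormedAddCommGroup E] [NormedSpace ℝ E] (F : ℝ × ℝ → E) (p : ℝ × ℝ) : E :=
  fderiv ℝ F p (1, 0)

/-- Partial derivative in the `v`-direction. -/
def pv {E : Type*} [NormedAddCommGroup E] [NormedSpace ℝ E] (F : ℝ × ℝ → E) (p : ℝ × ℝ) : E :=
  fderiv ℝ F p (0, 1)

/-- The adapted pure-frontal setup: `f` is a frontal with unit normal `ν`,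
`f_v = v·h`, `ν_v = v·ν₁`, the frame `{f_u, h, ν}` is linearly independent everywhere
and orthonormal along the `u`-axis. -/
structure AdaptedPureFrontal (f ν h ν₁ : ℝ × ℝ → R3) : Prop where
  smooth_f : ContDiff ℝ (⊤ : ℕ∞) f
  smooth_ν : ContDiff ℝ (⊤ : ℕ∞) ν
  smooth_h : ContDiff ℝ (⊤ : ℕ∞) h
  smooth_ν₁ : ContDiff ℝ (⊤ : ℕ∞) ν₁
  unit_ν : ∀ p, dot3 (ν p) (ν p) = 1
  orth_fu_ν : ∀ p, dot3 (pu f p) (ν p) = 0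
  orth_fv_ν : ∀ p, dot3 (pv f p) (ν p) = 0
  fv_eq : ∀ p : ℝ × ℝ, pv f p = p.2 • h p
  νv_eq : ∀ p : ℝ × ℝ, pv ν p = p.2 • ν₁ p
  indep : ∀ p, LinearIndependent ℝ ![pu f p, h p, ν p]
  adapted_fu : ∀ u : ℝ, dot3 (pu f (u, 0)) (pu f (u, 0)) = 1
  adapted_h : ∀ u : ℝ, dot3 (h (u, 0)) (h (u, 0)) = 1
  adapted_fu_h : ∀ u : ℝ, dot3 (pu f (u, 0)) (h (u, 0)) = 0
  adapted_h_ν : ∀ u : ℝ, dot3 (h (u, 0)) (ν (u, 0)) = 0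

/-- Ẽ = ⟨f_u, f_u⟩. -/
def Et (f : ℝ × ℝ → R3) (p : ℝ × ℝ) : ℝ := dot3 (pu f p) (pu f p)

/-- F̃ = ⟨f_u, h⟩. -/
def Ft (f h : ℝ × ℝ → R3) (p : ℝ × ℝ) : ℝ := dot3 (pu f p) (h p)

/-- G̃ = ⟨h, h⟩. -/
def Gt (h : ℝ × ℝ → R3) (p : ℝ × ℝ) : ℝ := dot3 (h p) (h p)

/-- L̃ = −⟨f_u, ν_u⟩. -/
def Lt (f ν : ℝ × ℝ → R3) (p : ℝ × ℝ) : ℝ := -dot3 (pu f p) (pu ν p)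

/-- M̃ = −⟨h, ν_u⟩. -/
def Mt (h ν : ℝ × ℝ → R3) (p : ℝ × ℝ) : ℝ := -dot3 (h p) (pu ν p)

/-- Ñ₁ = −⟨h, ν₁⟩. -/
def Nt1 (h ν₁ : ℝ × ℝ → R3) (p : ℝ × ℝ) : ℝ := -dot3 (h p) (ν₁ p)

/-- The Gaussian curvature K = (L̃Ñ₁ − M̃²)/(ẼG̃ − F̃²). -/
def Kg (f ν h ν₁ : ℝ × ℝ → R3) (p : ℝ × ℝ) : ℝ :=
  (Lt f ν p * Nt1 h ν₁ p - Mt h ν p ^ 2) / (Et f p * Gt h p - Ft f h p ^ 2)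

/-- The mean curvature H = (ẼÑ₁ − 2F̃M̃ + G̃L̃)/(2(ẼG̃ − F̃²)). -/
def Hm (f ν h ν₁ : ℝ × ℝ → R3) (p : ℝ × ℝ) : ℝ :=
  (Et f p * Nt1 h ν₁ p - 2 * Ft f h p * Mt h ν p + Gt h p * Lt f ν p) /
    (2 * (Et f p * Gt h p - Ft f h p ^ 2))

/-- The principal curvature κ = H + ε√(H² − K); `ε = 1` gives κ₁ and `ε = -1` gives κ₂. -/
def kap (f ν h ν₁ : ℝ × ℝ → R3) (ε : ℝ) (p : ℝ × ℝ) : ℝ :=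
  Hm f ν h ν₁ p + ε * Real.sqrt (Hm f ν h ν₁ p ^ 2 - Kg f ν h ν₁ p)

/-- First component of the principal vector field V = −v(M̃ − κF̃)∂_u + (L̃ − κẼ)∂_v. -/
def V1c (f ν h ν₁ : ℝ × ℝ → R3) (ε : ℝ) (p : ℝ × ℝ) : ℝ :=
  -(p.2 * (Mt h ν p - kap f ν h ν₁ ε p * Ft f h p))

/-- Second component of the principal vector field V = −v(M̃ − κF̃)∂_u + (L̃ − κẼ)∂_v. -/
def V2c (f ν h ν₁ : ℝ × ℝ → R3) (ε : ℝ) (p : ℝ × ℝ) : ℝ :=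
  Lt f ν p - kap f ν h ν₁ ε p * Et f p

/-- Directional derivative of `g` along the principal vector field V. -/
def VD (f ν h ν₁ : ℝ × ℝ → R3) (ε : ℝ) {E : Type*} [NormedAddCommGroup E] [NormedSpace ℝ E]
    (g : ℝ × ℝ → E) (p : ℝ × ℝ) : E :=
  V1c f ν h ν₁ ε p • pu g p + V2c f ν h ν₁ ε p • pv g p

/-- The radius of principal curvature ρ = 1/κ. -/
def rho (f ν h ν₁ : ℝ × ℝ → R3) (ε : ℝ) (p : ℝ × ℝ) : ℝ := (kap f ν h ν₁ ε p)⁻¹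

/-- The focal surface C = f + ρ·ν. -/
def Cf (f ν h ν₁ : ℝ × ℝ → R3) (ε : ℝ) (p : ℝ × ℝ) : R3 :=
  f p + rho f ν h ν₁ ε p • ν p

/-- The normal direction x = −(M̃ − κF̃)·f_u + (L̃ − κẼ)·h of the focal surface. -/
def xj (f ν h ν₁ : ℝ × ℝ → R3) (ε : ℝ) (p : ℝ × ℝ) : R3 :=
  (-(Mt h ν p - kap f ν h ν₁ ε p * Ft f h p)) • pu f p +
    (Lt f ν p - kap f ν h ν₁ ε p * Et f p) • h p

/-- The unit normal e = x/‖x‖ of the focal surface. -/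
def ej (f ν h ν₁ : ℝ × ℝ → R3) (ε : ℝ) (p : ℝ × ℝ) : R3 :=
  (norm3 (xj f ν h ν₁ ε p))⁻¹ • xj f ν h ν₁ ε p

/-- The limiting normal curvature κ_ν(u) = L̃(u,0). -/
def kν (f ν : ℝ × ℝ → R3) (u : ℝ) : ℝ := Lt f ν (u, 0)

/-- The cuspidal torsion κ_t(u) = M̃(u,0). -/
def kt (h ν : ℝ × ℝ → R3) (u : ℝ) : ℝ := Mt h ν (u, 0)

/-- The bias r_b(u) = 3Ñ₁(u,0). -/
def rb (h ν₁ : ℝ × ℝ → R3) (u : ℝ) : ℝ := 3 * Nt1 h ν₁ (u, 0)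

/-- The secondary cuspidal curvature r_c(u) = 24((Ñ₁)_v − 2F̃_vM̃ − G̃_vÑ₁)(u,0). -/
def rc (f ν h ν₁ : ℝ × ℝ → R3) (u : ℝ) : ℝ :=
  24 * (pv (Nt1 h ν₁) (u, 0) - 2 * pv (Ft f h) (u, 0) * Mt h ν (u, 0) -
    pv (Gt h) (u, 0) * Nt1 h ν₁ (u, 0))

/-- The singular curvature κ_s(u) = ⟨f_uu, h⟩(u,0). -/
def ks (f h : ℝ × ℝ → R3) (u : ℝ) : ℝ := dot3 (pu (pu f) (u, 0)) (h (u, 0))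

/-- The rank of the differential of `F` at `p`. -/
def rankAt (F : ℝ × ℝ → R3) (p : ℝ × ℝ) : ℕ :=
  Module.finrank ℝ (LinearMap.range (fderiv ℝ F p).toLinearMap)

/-!
Since `f_v = v·h` and `ν_v = v·ν₁`, both `df(V)` and `dν(V)` are divisible by `v`, and after
division Rodrigues' formula `dν(V) = -κ·df(V)` becomes the eigenvector equation of the second
fundamental form `(L̃, M̃, Ñ₁)` relative to the first one `(Ẽ, F̃, G̃)`. Hence in
`dC(V) = df(V) + ρ·dν(V) + (Vρ)·ν` the tangential terms cancel.

Along `v = 0` the frame is orthonormal, and differentiating the coefficients there gives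
`H_v = r_c / 48` and `K_v = κ_ν·r_c / 24`. So `r_c(0) = 0` makes `κ`, hence `ρ`, stationary in the
`v`-direction at `0`, which gives `C_v(0) = 0`; on the other hand
`⟨h, C_u⟩ = -ρ·κ_t ≠ 0` at `0`, so the rank is exactly one.
-/

section LinearAlgebra

lemma dot3_eq_dotProduct (a b : R3) : dot3 a b = a ⬝ᵥ b := by
  simp only [dot3, dotProduct, Fin.sum_univ_three]

lemma eq_of_forall_dotProduct_eq_of_linearIndependent {ι K : Type*} [Fintype ι] [Field K]
    {e : ι → ι → K} (he : LinearIndependent K e) {x y : ι → K} (hxy : ∀ i, e i ⬝ᵥ x = e i ⬝ᵥ y) :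
    x = y := by
  classical
  have hunit : IsUnit (Matrix.of e) := Matrix.linearIndependent_rows_iff_isUnit.mp he
  exact Matrix.mulVec_injective_of_isUnit hunit (funext hxy)

lemma dotProduct_self_mul_sub_sq_ne_zero {K : Type*} [Field K] [LinearOrder K]
    [IsStrictOrderedRing K] {a b : Fin 3 → K} (hab : LinearIndependent K ![a, b]) :
    a ⬝ᵥ a * b ⬝ᵥ b - (a ⬝ᵥ b) ^ 2 ≠ 0 := by
  have hcross : (crossProduct a b) ⬝ᵥ (crossProduct a b) ≠ 0 :=
    dotProduct_self_eq_zero.not.mpr (crossProduct_ne_zero_iff_linearIndependent.mpr hab)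
  rwa [cross_dot_cross, dotProduct_comm b a, ← sq] at hcross

end LinearAlgebra

section Calculus

lemma eq_zero_of_forall_snd_smul_eq_zero {X 𝕜 E : Type*} [TopologicalSpace X]
    [NontriviallyNormedField 𝕜] [TopologicalSpace E] [T2Space E] [AddCommGroup E] [Module 𝕜 E]
    {g : X × 𝕜 → E} (hg : Continuous g) (hzero : ∀ p, p.2 • g p = 0) (p : X × 𝕜) : g p = 0 := by
  have hdense : Dense {p : X × 𝕜 | p.2 ≠ 0} :=
    (dense_compl_singleton (0 : 𝕜)).preimage isOpenMap_snd
  exact congrFun (hg.ext_on hdense continuous_const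
    fun p hp => (smul_eq_zero.mp (hzero p)).resolve_left hp) p

lemma differentiable_div {𝕜 E : Type*} [NontriviallyNormedField 𝕜] [NormedAddCommGroup E]
    [NormedSpace 𝕜 E] {a b : E → 𝕜} (ha : Differentiable 𝕜 a) (hb : Differentiable 𝕜 b)
    (hne : ∀ x, b x ≠ 0) : Differentiable 𝕜 (fun x => a x / b x) := by
  simp only [div_eq_mul_inv]
  exact ha.fun_mul (hb.fun_inv hne)

section DotProduct

variable {ι E : Type*} [Fintype ι] [NormedAddCommGroup E] [NormedSpace ℝ E] {a b : E → ι → ℝ}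
  {x : E}

lemma hasFDerivAt_dotProduct (ha : DifferentiableAt ℝ a x) (hb : DifferentiableAt ℝ b x) :
    HasFDerivAt (fun y => a y ⬝ᵥ b y)
      (∑ i, (a x i • (ContinuousLinearMap.proj i).comp (fderiv ℝ b x) +
        b x i • (ContinuousLinearMap.proj i).comp (fderiv ℝ a x))) x :=
  HasFDerivAt.fun_sum fun i _ =>
    (hasFDerivAt_pi'.mp ha.hasFDerivAt i).mul (hasFDerivAt_pi'.mp hb.hasFDerivAt i)

lemma fderiv_dotProduct_apply (ha : DifferentiableAt ℝ a x) (hb : DifferentiableAt ℝ b x) (w : E) :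
    fderiv ℝ (fun y => a y ⬝ᵥ b y) x w = fderiv ℝ a x w ⬝ᵥ b x + a x ⬝ᵥ fderiv ℝ b x w := by
  rw [(hasFDerivAt_dotProduct ha hb).fderiv, add_comm, dotProduct_comm (fderiv ℝ a x w)]
  simp [dotProduct, Finset.sum_add_distrib]

lemma fderiv_dotProduct_add_eq_zero {c : ℝ} (ha : DifferentiableAt ℝ a x)
    (hb : DifferentiableAt ℝ b x) (hc : ∀ y, a y ⬝ᵥ b y = c) (w : E) :
    fderiv ℝ a x w ⬝ᵥ b x + a x ⬝ᵥ fderiv ℝ b x w = 0 := by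
  rw [← fderiv_dotProduct_apply ha hb, funext hc, fderiv_fun_const]
  rfl

lemma dotProduct_fderiv_eq_zero_of_dotProduct_self_eq {c : ℝ} (ha : DifferentiableAt ℝ a x)
    (hc : ∀ y, a y ⬝ᵥ a y = c) (w : E) : a x ⬝ᵥ fderiv ℝ a x w = 0 := by
  have hsum := fderiv_dotProduct_add_eq_zero ha ha hc w
  rw [dotProduct_comm (fderiv ℝ a x w)] at hsum
  linarith

end DotProduct

section Dot3

variable {a b : ℝ × ℝ → R3}

lemma differentiable_dot3 (ha : Differentiable ℝ a) (hb : Differentiable ℝ b) :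
    Differentiable ℝ fun p => dot3 (a p) (b p) := by
  simp only [dot3_eq_dotProduct]
  exact fun p => (hasFDerivAt_dotProduct (ha p) (hb p)).differentiableAt

lemma pv_dot3 (ha : Differentiable ℝ a) (hb : Differentiable ℝ b) (p : ℝ × ℝ) :
    pv (fun q => dot3 (a q) (b q)) p = pv a p ⬝ᵥ b p + a p ⬝ᵥ pv b p := by
  simp only [dot3_eq_dotProduct]
  exact fderiv_dotProduct_apply (ha p) (hb p) _

end Dot3

variable {E : Type*} [NormedAddCommGroup E] [NormedSpace ℝ E] {g : ℝ × ℝ → E}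

lemma fderiv_apply_eq_pu_add_pv (g : ℝ × ℝ → E) (p w : ℝ × ℝ) :
    fderiv ℝ g p w = w.1 • pu g p + w.2 • pv g p := by
  have hw : w = w.1 • ((1 : ℝ), (0 : ℝ)) + w.2 • ((0 : ℝ), (1 : ℝ)) := by ext <;> simp
  conv_lhs => rw [hw, map_add, map_smul, map_smul]
  rfl

lemma pv_neg (g : ℝ × ℝ → E) (p : ℝ × ℝ) : pv (fun q => -g q) p = -pv g p := by
  rw [pv, fderiv_fun_neg]
  rfl

lemma hasDerivAt_pv {p : ℝ × ℝ} (hg : DifferentiableAt ℝ g p) :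
    HasDerivAt (fun t => g (p.1, t)) (pv g p) p.2 :=
  hg.hasFDerivAt.comp_hasDerivAt p.2 ((hasDerivAt_const p.2 p.1).prodMk (hasDerivAt_id p.2))

lemma differentiable_fderiv_of_contDiff_two (hg : ContDiff ℝ 2 g) :
    Differentiable ℝ (fderiv ℝ g) :=
  (hg.fderiv_right (m := 1) (by norm_num)).differentiable one_ne_zero

lemma differentiable_pu (hg : ContDiff ℝ 2 g) : Differentiable ℝ (pu g) :=
  fun p => (differentiable_fderiv_of_contDiff_two hg p).clm_apply (differentiableAt_const _)

lemma pv_pu_comm (hg : ContDiff ℝ 2 g) (p : ℝ × ℝ) : pv (pu g) p = pu (pv g) p := by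
  have hsymm : IsSymmSndFDerivAt ℝ g p :=
    hg.contDiffAt.isSymmSndFDerivAt minSmoothness_of_isRCLikeNormedField.le
  have hsnd (w w' : ℝ × ℝ) :
      fderiv ℝ (fun q => fderiv ℝ g q w) p w' = fderiv ℝ (fderiv ℝ g) p w' w := by
    rw [fderiv_clm_apply (differentiable_fderiv_of_contDiff_two hg p) (differentiableAt_const w)]
    simp
  exact (hsnd _ _).trans ((hsymm.eq _ _).trans (hsnd _ _).symm)

lemma pv_pu_of_pv_eq_snd_smul {g' : ℝ × ℝ → E} (hg : ContDiff ℝ 2 g) (hg' : Differentiable ℝ g')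
    (hpv : ∀ p, pv g p = p.2 • g' p) (p : ℝ × ℝ) : pv (pu g) p = p.2 • pu g' p := by
  rw [pv_pu_comm hg, funext hpv]
  have hsmul := (hasFDerivAt_snd (𝕜 := ℝ) (p := p)).fun_smul (hg' p).hasFDerivAt
  simp [pu, hsmul.fderiv]

lemma rankAt_eq_one_of_pv_eq_zero {F : ℝ × ℝ → R3} {p : ℝ × ℝ} (hu : pu F p ≠ 0)
    (hv : pv F p = 0) : rankAt F p = 1 := by
  have hF : (fderiv ℝ F p).toLinearMap = (LinearMap.fst ℝ ℝ ℝ).smulRight (pu F p) := by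
    refine LinearMap.ext fun w => ?_
    simp [fderiv_apply_eq_pu_add_pv, hv]
  rw [rankAt, hF, LinearMap.range_smulRight_apply_of_surjective LinearMap.fst_surjective,
    finrank_span_singleton hu]

end Calculus

section PrincipalCurvature

variable {f ν h ν₁ : ℝ × ℝ → R3} {ε : ℝ} {p : ℝ × ℝ}

lemma kap_quadratic (hε : ε ^ 2 = 1) (hHK : 0 ≤ Hm f ν h ν₁ p ^ 2 - Kg f ν h ν₁ p) :
    kap f ν h ν₁ ε p ^ 2 - 2 * Hm f ν h ν₁ p * kap f ν h ν₁ ε p + Kg f ν h ν₁ p = 0 := by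
  unfold kap
  linear_combination √(Hm f ν h ν₁ p ^ 2 - Kg f ν h ν₁ p) ^ 2 * hε + Real.sq_sqrt hHK

lemma kap_characteristic (hε : ε ^ 2 = 1) (hHK : 0 ≤ Hm f ν h ν₁ p ^ 2 - Kg f ν h ν₁ p)
    (hD : Et f p * Gt h p - Ft f h p ^ 2 ≠ 0) :
    (Lt f ν p - kap f ν h ν₁ ε p * Et f p) * (Nt1 h ν₁ p - kap f ν h ν₁ ε p * Gt h p) =
      (Mt h ν p - kap f ν h ν₁ ε p * Ft f h p) ^ 2 := by
  have hK : Kg f ν h ν₁ p * (Et f p * Gt h p - Ft f h p ^ 2) =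
      Lt f ν p * Nt1 h ν₁ p - Mt h ν p ^ 2 := div_mul_cancel₀ _ hD
  have hH : Hm f ν h ν₁ p * (2 * (Et f p * Gt h p - Ft f h p ^ 2)) =
      Et f p * Nt1 h ν₁ p - 2 * Ft f h p * Mt h ν p + Gt h p * Lt f ν p :=
    div_mul_cancel₀ _ (mul_ne_zero two_ne_zero hD)
  linear_combination (Et f p * Gt h p - Ft f h p ^ 2) * kap_quadratic hε hHK - hK +
    kap f ν h ν₁ ε p * hH

lemma differentiableAt_kap_of_Hm_Kg (hH : DifferentiableAt ℝ (Hm f ν h ν₁) p)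
    (hK : DifferentiableAt ℝ (Kg f ν h ν₁) p) (hHK : Hm f ν h ν₁ p ^ 2 - Kg f ν h ν₁ p ≠ 0) :
    DifferentiableAt ℝ (kap f ν h ν₁ ε) p :=
  hH.add ((((hH.pow 2).sub hK).sqrt hHK).const_mul ε)

lemma pv_kap_eq_zero (hH : DifferentiableAt ℝ (Hm f ν h ν₁) p)
    (hK : DifferentiableAt ℝ (Kg f ν h ν₁) p) (hHK : Hm f ν h ν₁ p ^ 2 - Kg f ν h ν₁ p ≠ 0)
    (hHv : pv (Hm f ν h ν₁) p = 0) (hKv : pv (Kg f ν h ν₁) p = 0) :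
    pv (kap f ν h ν₁ ε) p = 0 := by
  have hH' := hasDerivAt_pv hH
  have hK' := hasDerivAt_pv hK
  rw [hHv] at hH'
  rw [hKv] at hK'
  have hkap := hH'.add ((((hH'.pow 2).sub hK').sqrt hHK).const_mul ε)
  refine ((hasDerivAt_pv (differentiableAt_kap_of_Hm_Kg hH hK hHK)).unique hkap).trans ?_
  simp

lemma pv_rho_eq_zero (hkap : DifferentiableAt ℝ (kap f ν h ν₁ ε) p) (hne : kap f ν h ν₁ ε p ≠ 0)
    (hkapv : pv (kap f ν h ν₁ ε) p = 0) : pv (rho f ν h ν₁ ε) p = 0 := by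
  refine ((hasDerivAt_pv (hkap.inv hne)).unique ((hasDerivAt_pv hkap).inv hne)).trans ?_
  simp [hkapv]

end PrincipalCurvature

section FocalSurface

variable {f ν h ν₁ : ℝ × ℝ → R3} {ε : ℝ} {p : ℝ × ℝ}

lemma fderiv_Cf_apply (hf : DifferentiableAt ℝ f p) (hν : DifferentiableAt ℝ ν p)
    (hρ : DifferentiableAt ℝ (rho f ν h ν₁ ε) p) (w : ℝ × ℝ) :
    fderiv ℝ (Cf f ν h ν₁ ε) p w = fderiv ℝ f p w + rho f ν h ν₁ ε p • fderiv ℝ ν p w +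
      fderiv ℝ (rho f ν h ν₁ ε) p w • ν p := by
  have hC : HasFDerivAt (Cf f ν h ν₁ ε) _ p :=
    hf.hasFDerivAt.add (hρ.hasFDerivAt.smul hν.hasFDerivAt)
  simp [hC.fderiv, add_assoc]

lemma VD_eq_fderiv {E : Type*} [NormedAddCommGroup E] [NormedSpace ℝ E] (g : ℝ × ℝ → E) :
    VD f ν h ν₁ ε g p = fderiv ℝ g p (V1c f ν h ν₁ ε p, V2c f ν h ν₁ ε p) :=
  (fderiv_apply_eq_pu_add_pv g p (V1c f ν h ν₁ ε p, V2c f ν h ν₁ ε p)).symm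

lemma VD_Cf (hf : DifferentiableAt ℝ f p) (hν : DifferentiableAt ℝ ν p)
    (hρ : DifferentiableAt ℝ (rho f ν h ν₁ ε) p) :
    VD f ν h ν₁ ε (Cf f ν h ν₁ ε) p = VD f ν h ν₁ ε f p +
      rho f ν h ν₁ ε p • VD f ν h ν₁ ε ν p + VD f ν h ν₁ ε (rho f ν h ν₁ ε) p • ν p := by
  simp only [VD_eq_fderiv, fderiv_Cf_apply hf hν hρ]

end FocalSurface

namespace AdaptedPureFrontal

variable {f ν h ν₁ : ℝ × ℝ → R3} {ε : ℝ} {p : ℝ × ℝ}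

section Differentiability

lemma differentiable_f (H : AdaptedPureFrontal f ν h ν₁) : Differentiable ℝ f :=
  H.smooth_f.differentiable (by simp)

lemma differentiable_ν (H : AdaptedPureFrontal f ν h ν₁) : Differentiable ℝ ν :=
  H.smooth_ν.differentiable (by simp)

lemma differentiable_h (H : AdaptedPureFrontal f ν h ν₁) : Differentiable ℝ h :=
  H.smooth_h.differentiable (by simp)

lemma differentiable_ν₁ (H : AdaptedPureFrontal f ν h ν₁) : Differentiable ℝ ν₁ :=
  H.smooth_ν₁.differentiable (by simp)

lemma contDiff_two_f (H : AdaptedPureFrontal f ν h ν₁) : ContDiff ℝ 2 f :=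
  H.smooth_f.of_le (WithTop.coe_le_coe.mpr le_top)

lemma contDiff_two_ν (H : AdaptedPureFrontal f ν h ν₁) : ContDiff ℝ 2 ν :=
  H.smooth_ν.of_le (WithTop.coe_le_coe.mpr le_top)

lemma differentiable_Et (H : AdaptedPureFrontal f ν h ν₁) : Differentiable ℝ (Et f) :=
  differentiable_dot3 (differentiable_pu H.contDiff_two_f) (differentiable_pu H.contDiff_two_f)

lemma differentiable_Ft (H : AdaptedPureFrontal f ν h ν₁) : Differentiable ℝ (Ft f h) :=
  differentiable_dot3 (differentiable_pu H.contDiff_two_f) H.differentiable_h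

lemma differentiable_Gt (H : AdaptedPureFrontal f ν h ν₁) : Differentiable ℝ (Gt h) :=
  differentiable_dot3 H.differentiable_h H.differentiable_h

lemma differentiable_Lt (H : AdaptedPureFrontal f ν h ν₁) : Differentiable ℝ (Lt f ν) :=
  (differentiable_dot3 (differentiable_pu H.contDiff_two_f)
    (differentiable_pu H.contDiff_two_ν)).neg

lemma differentiable_Mt (H : AdaptedPureFrontal f ν h ν₁) : Differentiable ℝ (Mt h ν) :=
  (differentiable_dot3 H.differentiable_h (differentiable_pu H.contDiff_two_ν)).neg

lemma differentiable_Nt1 (H : AdaptedPureFrontal f ν h ν₁) : Differentiable ℝ (Nt1 h ν₁) :=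
  (differentiable_dot3 H.differentiable_h H.differentiable_ν₁).neg

lemma gram_ne_zero (H : AdaptedPureFrontal f ν h ν₁) (p : ℝ × ℝ) :
    Et f p * Gt h p - Ft f h p ^ 2 ≠ 0 := by
  simp only [Et, Gt, Ft, dot3_eq_dotProduct]
  refine dotProduct_self_mul_sub_sq_ne_zero ?_
  have hfirst_two : ![pu f p, h p, ν p] ∘ ![0, 1] = ![pu f p, h p] := by
    ext i : 1
    fin_cases i <;> rfl
  exact hfirst_two ▸ (H.indep p).comp ![0, 1] (by decide)

lemma differentiable_Kg (H : AdaptedPureFrontal f ν h ν₁) : Differentiable ℝ (Kg f ν h ν₁) :=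
  differentiable_div
    ((H.differentiable_Lt.mul H.differentiable_Nt1).sub (H.differentiable_Mt.pow 2))
    ((H.differentiable_Et.mul H.differentiable_Gt).sub (H.differentiable_Ft.pow 2))
    H.gram_ne_zero

lemma differentiable_Hm (H : AdaptedPureFrontal f ν h ν₁) : Differentiable ℝ (Hm f ν h ν₁) :=
  differentiable_div
    (((H.differentiable_Et.mul H.differentiable_Nt1).sub
      ((H.differentiable_Ft.const_mul 2).mul H.differentiable_Mt)).add
        (H.differentiable_Gt.mul H.differentiable_Lt))
    (((H.differentiable_Et.mul H.differentiable_Gt).sub (H.differentiable_Ft.pow 2)).const_mul 2)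
    fun p => mul_ne_zero two_ne_zero (H.gram_ne_zero p)

lemma differentiableAt_kap (H : AdaptedPureFrontal f ν h ν₁)
    (hHK : Hm f ν h ν₁ p ^ 2 - Kg f ν h ν₁ p ≠ 0) : DifferentiableAt ℝ (kap f ν h ν₁ ε) p :=
  differentiableAt_kap_of_Hm_Kg (H.differentiable_Hm p) (H.differentiable_Kg p) hHK

lemma differentiableAt_rho (H : AdaptedPureFrontal f ν h ν₁)
    (hHK : Hm f ν h ν₁ p ^ 2 - Kg f ν h ν₁ p ≠ 0) (hκ : kap f ν h ν₁ ε p ≠ 0) :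
    DifferentiableAt ℝ (rho f ν h ν₁ ε) p :=
  (H.differentiableAt_kap hHK).inv hκ

end Differentiability

section Frame

lemma eq_of_frame_dotProduct_eq (H : AdaptedPureFrontal f ν h ν₁) {x y : R3}
    (hfu : pu f p ⬝ᵥ x = pu f p ⬝ᵥ y) (hh : h p ⬝ᵥ x = h p ⬝ᵥ y) (hν : ν p ⬝ᵥ x = ν p ⬝ᵥ y) :
    x = y :=
  eq_of_forall_dotProduct_eq_of_linearIndependent (H.indep p) (by simp [Fin.forall_fin_succ, *])

lemma ν_dotProduct_self (H : AdaptedPureFrontal f ν h ν₁) (p : ℝ × ℝ) : ν p ⬝ᵥ ν p = 1 := by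
  rw [← dot3_eq_dotProduct, H.unit_ν]

lemma pu_f_dotProduct_ν (H : AdaptedPureFrontal f ν h ν₁) (p : ℝ × ℝ) : pu f p ⬝ᵥ ν p = 0 := by
  rw [← dot3_eq_dotProduct, H.orth_fu_ν]

lemma h_dotProduct_ν (H : AdaptedPureFrontal f ν h ν₁) (p : ℝ × ℝ) : h p ⬝ᵥ ν p = 0 := by
  refine eq_zero_of_forall_snd_smul_eq_zero
    (H.differentiable_h.continuous.dotProduct H.differentiable_ν.continuous) (fun q => ?_) p
  rw [← smul_dotProduct, ← H.fv_eq, ← dot3_eq_dotProduct, H.orth_fv_ν]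

lemma ν_dotProduct_pu_ν (H : AdaptedPureFrontal f ν h ν₁) (p : ℝ × ℝ) : ν p ⬝ᵥ pu ν p = 0 :=
  dotProduct_fderiv_eq_zero_of_dotProduct_self_eq (H.differentiable_ν p) H.ν_dotProduct_self _

lemma ν_dotProduct_ν₁ (H : AdaptedPureFrontal f ν h ν₁) (p : ℝ × ℝ) : ν p ⬝ᵥ ν₁ p = 0 := by
  refine eq_zero_of_forall_snd_smul_eq_zero
    (H.differentiable_ν.continuous.dotProduct H.differentiable_ν₁.continuous) (fun q => ?_) p
  rw [← dotProduct_smul, ← H.νv_eq]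
  exact dotProduct_fderiv_eq_zero_of_dotProduct_self_eq (H.differentiable_ν q) H.ν_dotProduct_self _

lemma pv_pu_f (H : AdaptedPureFrontal f ν h ν₁) (p : ℝ × ℝ) : pv (pu f) p = p.2 • pu h p :=
  pv_pu_of_pv_eq_snd_smul H.contDiff_two_f H.differentiable_h H.fv_eq p

lemma pv_pu_ν (H : AdaptedPureFrontal f ν h ν₁) (p : ℝ × ℝ) : pv (pu ν) p = p.2 • pu ν₁ p :=
  pv_pu_of_pv_eq_snd_smul H.contDiff_two_ν H.differentiable_ν₁ H.νv_eq p

lemma pu_f_dotProduct_ν₁ (H : AdaptedPureFrontal f ν h ν₁) (p : ℝ × ℝ) :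
    pu f p ⬝ᵥ ν₁ p = h p ⬝ᵥ pu ν p := by
  have hfu := differentiable_pu H.contDiff_two_f
  have hνu := differentiable_pu H.contDiff_two_ν
  refine sub_eq_zero.mp (eq_zero_of_forall_snd_smul_eq_zero
    (g := fun q => pu f q ⬝ᵥ ν₁ q - h q ⬝ᵥ pu ν q)
    ((hfu.continuous.dotProduct H.differentiable_ν₁.continuous).sub
      (H.differentiable_h.continuous.dotProduct hνu.continuous)) (fun q => ?_) p)
  have hv : pv (pu f) q ⬝ᵥ ν q + pu f q ⬝ᵥ pv ν q = 0 :=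
    fderiv_dotProduct_add_eq_zero (hfu q) (H.differentiable_ν q) H.pu_f_dotProduct_ν _
  have hu : pu h q ⬝ᵥ ν q + h q ⬝ᵥ pu ν q = 0 :=
    fderiv_dotProduct_add_eq_zero (H.differentiable_h q) (H.differentiable_ν q) H.h_dotProduct_ν _
  rw [H.pv_pu_f, H.νv_eq, smul_dotProduct, dotProduct_smul] at hv
  simp only [smul_eq_mul] at hv ⊢
  linear_combination hv - q.2 * hu

end Frame

section Rodrigues

/-- Rodrigues' formula divided by `v`, which keeps its content on the singular set `v = 0`. -/
lemma rodrigues_div_v (H : AdaptedPureFrontal f ν h ν₁) (hε : ε ^ 2 = 1)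
    (hHK : 0 ≤ Hm f ν h ν₁ p ^ 2 - Kg f ν h ν₁ p) :
    (-(Mt h ν p - kap f ν h ν₁ ε p * Ft f h p)) • pu ν p +
      (Lt f ν p - kap f ν h ν₁ ε p * Et f p) • ν₁ p =
        -(kap f ν h ν₁ ε p • xj f ν h ν₁ ε p) := by
  have hchar := kap_characteristic hε hHK (H.gram_ne_zero p)
  unfold xj
  generalize kap f ν h ν₁ ε p = k at hchar ⊢
  apply H.eq_of_frame_dotProduct_eq (p := p) <;>
    simp only [dotProduct_add, dotProduct_neg, dotProduct_smul, smul_eq_mul]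
  · simp only [Et, Ft, Lt, Mt, dot3_eq_dotProduct, H.pu_f_dotProduct_ν₁]
    ring
  · simp only [Et, Ft, Gt, Lt, Mt, Nt1, dot3_eq_dotProduct, dotProduct_comm (h p) (pu f p)]
      at hchar ⊢
    linear_combination -hchar
  · rw [H.ν_dotProduct_pu_ν, H.ν_dotProduct_ν₁, dotProduct_comm (ν p) (pu f p),
      dotProduct_comm (ν p) (h p), H.pu_f_dotProduct_ν, H.h_dotProduct_ν]
    ring

lemma VD_f_eq_smul_xj (H : AdaptedPureFrontal f ν h ν₁) :
    VD f ν h ν₁ ε f p = p.2 • xj f ν h ν₁ ε p := by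
  rw [VD, V1c, V2c, H.fv_eq, xj]
  module

lemma VD_ν_eq_neg_kap_smul_VD_f (H : AdaptedPureFrontal f ν h ν₁) (hε : ε ^ 2 = 1)
    (hHK : 0 ≤ Hm f ν h ν₁ p ^ 2 - Kg f ν h ν₁ p) :
    VD f ν h ν₁ ε ν p = -(kap f ν h ν₁ ε p • VD f ν h ν₁ ε f p) := by
  rw [H.VD_f_eq_smul_xj, smul_comm, ← smul_neg, ← H.rodrigues_div_v hε hHK, VD, V1c, V2c, H.νv_eq]
  module

lemma VD_Cf_eq_smul_ν (H : AdaptedPureFrontal f ν h ν₁) (hε : ε ^ 2 = 1)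
    (hHK : 0 < Hm f ν h ν₁ p ^ 2 - Kg f ν h ν₁ p) (hκ : kap f ν h ν₁ ε p ≠ 0) :
    VD f ν h ν₁ ε (Cf f ν h ν₁ ε) p = VD f ν h ν₁ ε (rho f ν h ν₁ ε) p • ν p := by
  rw [VD_Cf (H.differentiable_f p) (H.differentiable_ν p) (H.differentiableAt_rho hHK.ne' hκ),
    H.VD_ν_eq_neg_kap_smul_VD_f hε hHK.le, smul_neg, rho, inv_smul_smul₀ hκ,
    add_neg_cancel, zero_add]

end Rodrigues

section Axis

lemma Et_axis (H : AdaptedPureFrontal f ν h ν₁) (u : ℝ) : Et f (u, 0) = 1 :=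
  H.adapted_fu u

lemma Ft_axis (H : AdaptedPureFrontal f ν h ν₁) (u : ℝ) : Ft f h (u, 0) = 0 :=
  H.adapted_fu_h u

lemma Gt_axis (H : AdaptedPureFrontal f ν h ν₁) (u : ℝ) : Gt h (u, 0) = 1 :=
  H.adapted_h u

lemma pu_ν_axis (H : AdaptedPureFrontal f ν h ν₁) (u : ℝ) :
    pu ν (u, 0) = -(kν f ν u • pu f (u, 0) + kt h ν u • h (u, 0)) := by
  have hE := H.Et_axis u
  have hF := H.Ft_axis u
  have hG := H.Gt_axis u
  simp only [Et, Ft, Gt, dot3_eq_dotProduct] at hE hF hG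
  apply H.eq_of_frame_dotProduct_eq (p := (u, 0)) <;>
    simp only [dotProduct_add, dotProduct_neg, dotProduct_smul, smul_eq_mul]
  · simp only [kν, Lt, dot3_eq_dotProduct, hE, hF]
    ring
  · simp only [kt, Mt, dot3_eq_dotProduct, dotProduct_comm (h (u, 0)) (pu f (u, 0)), hF, hG]
    ring
  · rw [H.ν_dotProduct_pu_ν, dotProduct_comm _ (pu f (u, 0)), dotProduct_comm _ (h (u, 0)),
      H.pu_f_dotProduct_ν, H.h_dotProduct_ν]
    ring

lemma pv_Et_axis (H : AdaptedPureFrontal f ν h ν₁) (u : ℝ) : pv (Et f) (u, 0) = 0 := by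
  have hfu := differentiable_pu H.contDiff_two_f
  exact (pv_dot3 hfu hfu _).trans (by simp [H.pv_pu_f])

lemma pv_Ft_axis (H : AdaptedPureFrontal f ν h ν₁) (u : ℝ) :
    pv (Ft f h) (u, 0) = pu f (u, 0) ⬝ᵥ pv h (u, 0) :=
  (pv_dot3 (differentiable_pu H.contDiff_two_f) H.differentiable_h _).trans (by simp [H.pv_pu_f])

lemma pv_Gt (H : AdaptedPureFrontal f ν h ν₁) (p : ℝ × ℝ) :
    pv (Gt h) p = 2 * (h p ⬝ᵥ pv h p) :=
  (pv_dot3 H.differentiable_h H.differentiable_h p).trans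
    (by rw [dotProduct_comm (pv h p), two_mul])

lemma pv_Lt_axis (H : AdaptedPureFrontal f ν h ν₁) (u : ℝ) : pv (Lt f ν) (u, 0) = 0 := by
  refine (pv_neg _ _).trans ?_
  rw [pv_dot3 (differentiable_pu H.contDiff_two_f) (differentiable_pu H.contDiff_two_ν)]
  simp [H.pv_pu_f, H.pv_pu_ν]

lemma pv_Mt_axis (H : AdaptedPureFrontal f ν h ν₁) (u : ℝ) :
    pv (Mt h ν) (u, 0) = pv (Ft f h) (u, 0) * kν f ν u + pv (Gt h) (u, 0) / 2 * kt h ν u := by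
  refine (pv_neg _ _).trans ?_
  rw [pv_dot3 H.differentiable_h (differentiable_pu H.contDiff_two_ν), H.pv_pu_ν, H.pu_ν_axis,
    H.pv_Ft_axis, H.pv_Gt, dotProduct_comm (pu f (u, 0)), dotProduct_comm (h (u, 0)) (pv h (u, 0))]
  simp only [zero_smul, dotProduct_zero, dotProduct_neg, dotProduct_add, dotProduct_smul,
    smul_eq_mul]
  ring

lemma pv_Kg_axis (H : AdaptedPureFrontal f ν h ν₁) (u : ℝ) :
    pv (Kg f ν h ν₁) (u, 0) = kν f ν u * rc f ν h ν₁ u / 24 := by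
  have hE := hasDerivAt_pv (H.differentiable_Et (u, 0))
  have hF := hasDerivAt_pv (H.differentiable_Ft (u, 0))
  have hG := hasDerivAt_pv (H.differentiable_Gt (u, 0))
  have hL := hasDerivAt_pv (H.differentiable_Lt (u, 0))
  have hM := hasDerivAt_pv (H.differentiable_Mt (u, 0))
  have hN := hasDerivAt_pv (H.differentiable_Nt1 (u, 0))
  have hderiv := ((hL.mul hN).sub (hM.pow 2)).div ((hE.mul hG).sub (hF.pow 2))
    (H.gram_ne_zero (u, 0))
  refine ((hasDerivAt_pv (H.differentiable_Kg (u, 0))).unique hderiv).trans ?_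
  simp only [H.Et_axis, H.Ft_axis, H.Gt_axis, H.pv_Et_axis, H.pv_Lt_axis, H.pv_Mt_axis, rc, kν, kt,
    Pi.sub_apply, Pi.mul_apply, Pi.pow_apply]
  ring

lemma pv_Hm_axis (H : AdaptedPureFrontal f ν h ν₁) (u : ℝ) :
    pv (Hm f ν h ν₁) (u, 0) = rc f ν h ν₁ u / 48 := by
  have hE := hasDerivAt_pv (H.differentiable_Et (u, 0))
  have hF := hasDerivAt_pv (H.differentiable_Ft (u, 0))
  have hG := hasDerivAt_pv (H.differentiable_Gt (u, 0))
  have hL := hasDerivAt_pv (H.differentiable_Lt (u, 0))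
  have hM := hasDerivAt_pv (H.differentiable_Mt (u, 0))
  have hN := hasDerivAt_pv (H.differentiable_Nt1 (u, 0))
  have hderiv := (((hE.mul hN).sub ((hF.const_mul 2).mul hM)).add (hG.mul hL)).div
    (((hE.mul hG).sub (hF.pow 2)).const_mul 2) (mul_ne_zero two_ne_zero (H.gram_ne_zero (u, 0)))
  refine ((hasDerivAt_pv (H.differentiable_Hm (u, 0))).unique hderiv).trans ?_
  simp only [H.Et_axis, H.Ft_axis, H.Gt_axis, H.pv_Et_axis, H.pv_Lt_axis, rc, Pi.add_apply,
    Pi.sub_apply, Pi.mul_apply, Pi.pow_apply]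
  ring

lemma pv_rho_axis_eq_zero (H : AdaptedPureFrontal f ν h ν₁) {u : ℝ}
    (hHK : Hm f ν h ν₁ (u, 0) ^ 2 - Kg f ν h ν₁ (u, 0) ≠ 0) (hκ : kap f ν h ν₁ ε (u, 0) ≠ 0)
    (hrc : rc f ν h ν₁ u = 0) : pv (rho f ν h ν₁ ε) (u, 0) = 0 :=
  pv_rho_eq_zero (H.differentiableAt_kap hHK) hκ <|
    pv_kap_eq_zero (H.differentiable_Hm _) (H.differentiable_Kg _) hHK
      (by rw [H.pv_Hm_axis, hrc, zero_div]) (by rw [H.pv_Kg_axis, hrc, mul_zero, zero_div])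

lemma pv_Cf_axis (H : AdaptedPureFrontal f ν h ν₁) {u : ℝ}
    (hρ : DifferentiableAt ℝ (rho f ν h ν₁ ε) (u, 0)) :
    pv (Cf f ν h ν₁ ε) (u, 0) = pv (rho f ν h ν₁ ε) (u, 0) • ν (u, 0) := by
  have hCv : pv (Cf f ν h ν₁ ε) (u, 0) = pv f (u, 0) + rho f ν h ν₁ ε (u, 0) • pv ν (u, 0) +
      pv (rho f ν h ν₁ ε) (u, 0) • ν (u, 0) :=
    fderiv_Cf_apply (H.differentiable_f _) (H.differentiable_ν _) hρ (0, 1)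
  simpa only [H.fv_eq, H.νv_eq, zero_smul, smul_zero, zero_add] using hCv

lemma h_dotProduct_pu_Cf_axis (H : AdaptedPureFrontal f ν h ν₁) {u : ℝ}
    (hρ : DifferentiableAt ℝ (rho f ν h ν₁ ε) (u, 0)) :
    h (u, 0) ⬝ᵥ pu (Cf f ν h ν₁ ε) (u, 0) = -(rho f ν h ν₁ ε (u, 0) * kt h ν u) := by
  have hCu : pu (Cf f ν h ν₁ ε) (u, 0) = pu f (u, 0) + rho f ν h ν₁ ε (u, 0) • pu ν (u, 0) +
      pu (rho f ν h ν₁ ε) (u, 0) • ν (u, 0) :=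
    fderiv_Cf_apply (H.differentiable_f _) (H.differentiable_ν _) hρ (1, 0)
  have hF := H.Ft_axis u
  rw [Ft, dot3_eq_dotProduct, dotProduct_comm] at hF
  rw [hCu, dotProduct_add, dotProduct_add, dotProduct_smul, dotProduct_smul, hF, H.h_dotProduct_ν,
    kt, Mt, dot3_eq_dotProduct]
  simp only [smul_eq_mul]
  ring

lemma rankAt_Cf_axis (H : AdaptedPureFrontal f ν h ν₁) {u : ℝ}
    (hHK : Hm f ν h ν₁ (u, 0) ^ 2 - Kg f ν h ν₁ (u, 0) ≠ 0) (hκ : kap f ν h ν₁ ε (u, 0) ≠ 0)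
    (hkt : kt h ν u ≠ 0) (hrc : rc f ν h ν₁ u = 0) : rankAt (Cf f ν h ν₁ ε) (u, 0) = 1 := by
  have hρ := H.differentiableAt_rho hHK hκ
  refine rankAt_eq_one_of_pv_eq_zero (fun hCu => ?_) ?_
  · have hpair := H.h_dotProduct_pu_Cf_axis hρ
    rw [hCu, dotProduct_zero, zero_eq_neg] at hpair
    exact mul_ne_zero (inv_ne_zero hκ) hkt hpair
  · rw [H.pv_Cf_axis hρ, H.pv_rho_axis_eq_zero hHK hκ hrc, zero_smul]

end Axis

end AdaptedPureFrontal

/-- if κ_t(0) ≠ 0 and r_c(0) = 0, then rank d(C_j)_0 = 1,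
d(C_j)(V_j) = (V_jρ_j)·ν everywhere, and in particular V_j is a null vector field of
C_j along the singular set {V_jρ_j = 0}. -/
theorem stmt_12 (f ν h ν₁ : ℝ × ℝ → R3) (H : AdaptedPureFrontal f ν h ν₁)
    (ε : ℝ) (hε : ε = 1 ∨ ε = -1)
    (hHK : ∀ p : ℝ × ℝ, Hm f ν h ν₁ p ^ 2 - Kg f ν h ν₁ p > 0)
    (hκ : ∀ p : ℝ × ℝ, kap f ν h ν₁ ε p ≠ 0)
    (hkt : kt h ν 0 ≠ 0) (hrc : rc f ν h ν₁ 0 = 0) :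
    rankAt (Cf f ν h ν₁ ε) 0 = 1 ∧
    (∀ p : ℝ × ℝ,
      VD f ν h ν₁ ε (Cf f ν h ν₁ ε) p = VD f ν h ν₁ ε (rho f ν h ν₁ ε) p • ν p) ∧
    (∀ p : ℝ × ℝ,
      VD f ν h ν₁ ε (rho f ν h ν₁ ε) p = 0 → VD f ν h ν₁ ε (Cf f ν h ν₁ ε) p = 0) := by
  have hε_sq : ε ^ 2 = 1 := sq_eq_one_iff.mpr hε
  have hVD : ∀ p, VD f ν h ν₁ ε (Cf f ν h ν₁ ε) p = VD f ν h ν₁ ε (rho f ν h ν₁ ε) p • ν p :=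
    fun p => H.VD_Cf_eq_smul_ν hε_sq (hHK p) (hκ p)
  exact ⟨H.rankAt_Cf_axis (hHK _).ne' (hκ _) hkt hrc, hVD,
    fun p hp => by rw [hVD, hp, zero_smul]⟩
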